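/- Let K be a finite 2-dimensional geometric simplicial complex in ℝⁿ and let v be a vertex of K such that every edge of K containing v is contained in at most two triangles of K. If the link graph L(v) is disconnected (it has at least two nonempty connected components), then v is not a locally planar point of |K|. -/

import Mathlib

open Geometry

namespace PaperAlg

/-- Points of `ℝⁿ`. -/
abbrev Pt (n : ℕ) := EuclideanSpace ℝ (Fin n)

variable {n : ℕ}

/-- The 1-skeleton graph of a geometric simplicial complex `K`: its vertex set is the set of
vertices of `K`, and two vertices are adjacent iff they form an edge (a two-element face) of `K`. -/
def skeletonGraph (K : SimplicialComplex ℝ (Pt n)) : SimpleGraph K.vertices where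
  Adj u v := (u : Pt n) ≠ (v : Pt n) ∧
    ∃ s ∈ K.faces, (s : Set (Pt n)) = {(u : Pt n), (v : Pt n)}
  symm := by
    refine ⟨?_⟩
    rintro u v ⟨hne, s, hs, hset⟩
    exact ⟨fun h => hne h.symm, s, hs, by rw [hset, Set.pair_comm]⟩
  loopless := by refine ⟨?_⟩; rintro u ⟨hne, -⟩; exact hne rfl

/-- `K` is 2-dimensional: every face has at most three elements. -/
def TwoDimensional (K : SimplicialComplex ℝ (Pt n)) : Prop :=
  ∀ s ∈ K.faces, s.card ≤ 3

/-- The set of triangles (three-element faces) of `K` containing the finset `e`. -/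
def trianglesContaining (K : SimplicialComplex ℝ (Pt n)) (e : Finset (Pt n)) :
    Set (Finset (Pt n)) :=
  {t | t ∈ K.faces ∧ t.card = 3 ∧ e ⊆ t}

/-- An edge of `K` contained in exactly one triangle. -/
def IsBoundaryEdge (K : SimplicialComplex ℝ (Pt n)) (e : Finset (Pt n)) : Prop :=
  e ∈ K.faces ∧ e.card = 2 ∧ (trianglesContaining K e).ncard = 1

/-- An edge of `K` contained in exactly two triangles. -/
def IsInteriorEdge (K : SimplicialComplex ℝ (Pt n)) (e : Finset (Pt n)) : Prop :=
  e ∈ K.faces ∧ e.card = 2 ∧ (trianglesContaining K e).ncard = 2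

/-- The closed upper half-plane `{(a, b) ∈ ℝ² : b ≥ 0}`. -/
def HalfPlane : Set (ℝ × ℝ) := {p | 0 ≤ p.2}

/-- `x` has a neighborhood in `|K|` homeomorphic to an open subset of `ℝ²`. -/
def HasPlanarNbhd (K : SimplicialComplex ℝ (Pt n)) (x : Pt n) : Prop :=
  ∃ U : Set (Pt n), U ⊆ K.space ∧ U ∈ nhdsWithin x K.space ∧
    ∃ V : Set (ℝ × ℝ), IsOpen V ∧ Nonempty (↥U ≃ₜ ↥V)

/-- `x` has a neighborhood in `|K|` homeomorphic to an open subset of the closed half-plane. -/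
def HasHalfPlanarNbhd (K : SimplicialComplex ℝ (Pt n)) (x : Pt n) : Prop :=
  ∃ U : Set (Pt n), U ⊆ K.space ∧ U ∈ nhdsWithin x K.space ∧
    ∃ V : Set ↥HalfPlane, IsOpen V ∧ Nonempty (↥U ≃ₜ ↥V)

/-- `x` is a locally planar point of `|K|`. -/
def IsLocallyPlanarPt (K : SimplicialComplex ℝ (Pt n)) (x : Pt n) : Prop :=
  x ∈ K.space ∧ (HasPlanarNbhd K x ∨ HasHalfPlanarNbhd K x)

/-- `K` is locally planar if every point of `|K|` is locally planar. -/
def LocallyPlanar (K : SimplicialComplex ℝ (Pt n)) : Prop :=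
  ∀ x ∈ K.space, IsLocallyPlanarPt K x

/-- The vertices `a` of `K` such that `{v, a}` is an edge of `K`. -/
def linkVertices (K : SimplicialComplex ℝ (Pt n)) (v : Pt n) : Set (Pt n) :=
  {a | a ≠ v ∧ ∃ s ∈ K.faces, (s : Set (Pt n)) = {v, a}}

/-- The link graph `L(v)`: vertices are the `a` with `{v, a}` an edge of `K`, and `a`, `b`
are adjacent iff `{v, a, b}` is a triangle of `K`. -/
def linkGraph (K : SimplicialComplex ℝ (Pt n)) (v : Pt n) :
    SimpleGraph (linkVertices K v) where
  Adj a b := (a : Pt n) ≠ (b : Pt n) ∧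
    ∃ t ∈ K.faces, t.card = 3 ∧ (t : Set (Pt n)) = {v, (a : Pt n), (b : Pt n)}
  symm := by
    refine ⟨?_⟩
    rintro a b ⟨hne, t, ht, hc, hset⟩
    exact ⟨fun h => hne h.symm, t, ht, hc, by rw [hset, Set.pair_comm]⟩
  loopless := by refine ⟨?_⟩; rintro a ⟨hne, -⟩; exact hne rfl

/-- The vertices of `K` lying on some boundary edge. -/
def boundaryVertices (K : SimplicialComplex ℝ (Pt n)) : Set (Pt n) :=
  {v | ∃ e, IsBoundaryEdge K e ∧ v ∈ e}

/-- The boundary graph of `K`: the simple graph formed by the boundary edges of `K`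
and their endpoints. -/
def boundaryGraph (K : SimplicialComplex ℝ (Pt n)) :
    SimpleGraph (boundaryVertices K) where
  Adj u v := (u : Pt n) ≠ (v : Pt n) ∧
    ∃ e, IsBoundaryEdge K e ∧ (e : Set (Pt n)) = {(u : Pt n), (v : Pt n)}
  symm := by
    refine ⟨?_⟩
    rintro u v ⟨hne, e, he, hset⟩
    exact ⟨fun h => hne h.symm, e, he, by rw [hset, Set.pair_comm]⟩
  loopless := by refine ⟨?_⟩; rintro u ⟨hne, -⟩; exact hne rfl

/-- The Euler characteristic `χ(K) = V - E + F`. -/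
noncomputable def eulerChar (K : SimplicialComplex ℝ (Pt n)) : ℤ :=
  (K.vertices.ncard : ℤ)
    - ({e : Finset (Pt n) | e ∈ K.faces ∧ e.card = 2}.ncard : ℤ)
    + ({t : Finset (Pt n) | t ∈ K.faces ∧ t.card = 3}.ncard : ℤ)

/-- The three directed edges induced on its boundary by the cyclic ordering `(a, b, c)`. -/
def triDirs (o : Pt n × Pt n × Pt n) : Set (Pt n × Pt n) :=
  {(o.1, o.2.1), (o.2.1, o.2.2), (o.2.2, o.1)}

/-- `K` is orientable: one can assign to each triangle a cyclic ordering of its vertices so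
that the two triangles containing any interior edge induce opposite directions on it. -/
def Orientable (K : SimplicialComplex ℝ (Pt n)) : Prop :=
  ∃ ori : Finset (Pt n) → Pt n × Pt n × Pt n,
    (∀ t ∈ K.faces, t.card = 3 →
      (t : Set (Pt n)) = {(ori t).1, (ori t).2.1, (ori t).2.2}) ∧
    (∀ t₁ ∈ K.faces, ∀ t₂ ∈ K.faces, t₁.card = 3 → t₂.card = 3 → t₁ ≠ t₂ →
      ∀ e ∈ K.faces, e.card = 2 → e ⊆ t₁ → e ⊆ t₂ →
      ∀ x y : Pt n, x ∈ e → y ∈ e → x ≠ y →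
        (x, y) ∈ triDirs (ori t₁) → (y, x) ∈ triDirs (ori t₂))

/-- The genus of a topological space `X`: the supremum of the numbers `m` for which there exist
`m` pairwise disjoint subsets of `X`, each homeomorphic to the circle `S¹`, whose union has
connected complement. -/
noncomputable def genus (X : Type*) [TopologicalSpace X] : ℕ :=
  sSup {m : ℕ | ∃ C : Fin m → Set X,
    (Pairwise fun i j => Disjoint (C i) (C j)) ∧
    (∀ i, Nonempty (↥(C i) ≃ₜ ↥(Metric.sphere (0 : EuclideanSpace ℝ (Fin 2)) 1))) ∧
    IsConnected (⋃ i, C i)ᶜ}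

/-! Let `x` have a neighborhood homeomorphic to an open subset of a convex set that is not contained
in a line, such as the plane or the half-plane. Then `x` has arbitrarily small connected punctured
neighborhoods. If the link of `v` is disconnected, the star of `v` is instead a union of two closed
sets that meet only at `v` and both accumulate there, so no small punctured neighborhood of `v` in
`|K|` is connected. -/

section PreconnectedBasis

open Filter Topology

variable {X Y : Type*} [TopologicalSpace X] [TopologicalSpace Y]

/-- The filter `l` has a basis of preconnected sets. For `l` the filter of punctured neighborhoods
of a point `x`, this says that `x` does not locally separate the space. -/
def HasPreconnectedBasis (l : Filter X) : Prop :=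
  ∀ N ∈ l, ∃ W ∈ l, W ⊆ N ∧ IsPreconnected W

theorem hasPreconnectedBasis_map_iff {f : X → Y} (hf : IsEmbedding f) {l : Filter X} :
    HasPreconnectedBasis (map f l) ↔ HasPreconnectedBasis l := by
  constructor
  · intro h N hN
    obtain ⟨W, hW, hWN, hWc⟩ := h (f '' N) (image_mem_map hN)
    have hfW : f '' (f ⁻¹' W) = W :=
      Set.image_preimage_eq_of_subset (hWN.trans (Set.image_subset_range f N))
    refine ⟨f ⁻¹' W, hW, ?_, hf.isInducing.isPreconnected_image.1 (hfW.symm ▸ hWc)⟩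
    exact (Set.preimage_mono hWN).trans (Set.preimage_image_eq N hf.injective).subset
  · intro h N hN
    obtain ⟨W, hW, hWN, hWc⟩ := h (f ⁻¹' N) hN
    exact ⟨f '' W, image_mem_map hW, Set.image_subset_iff.2 hWN,
      hWc.image f hf.continuous.continuousOn⟩

theorem hasPreconnectedBasis_nhdsNE_iff {f : X → Y} (hf : IsEmbedding f) {x : X} :
    HasPreconnectedBasis (𝓝[≠] x) ↔ HasPreconnectedBasis (𝓝[Set.range f \ {f x}] (f x)) := by
  rw [← hasPreconnectedBasis_map_iff hf, hf.map_nhdsWithin_eq,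
    Set.image_compl_eq_range_sdiff_image hf.injective, Set.image_singleton]

theorem hasPreconnectedBasis_nhdsNE_iff_of_isOpenEmbedding {f : X → Y} (hf : IsOpenEmbedding f)
    {x : X} : HasPreconnectedBasis (𝓝[≠] x) ↔ HasPreconnectedBasis (𝓝[≠] (f x)) := by
  have hrange : Set.range f ∈ 𝓝[{f x}ᶜ] (f x) :=
    mem_nhdsWithin_of_mem_nhds (hf.isOpen_range.mem_nhds (Set.mem_range_self x))
  rw [hasPreconnectedBasis_nhdsNE_iff hf.isEmbedding, Set.sdiff_eq, nhdsWithin_inter_of_mem hrange]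

end PreconnectedBasis

section Convex

open Topology

variable {E : Type*} [AddCommGroup E] [Module ℝ E] {S : Set E}

theorem exists_notMem_line_of_not_collinear (hS : ¬ Collinear ℝ S) (x y : E) :
    ∃ q ∈ S, q ∉ line[ℝ, x, y] := by
  by_contra! hline
  have hcol : Collinear ℝ (line[ℝ, x, y] : Set E) := by
    rw [Collinear, ← AffineSubspace.direction_eq_vectorSpan, direction_affineSpan]
    exact collinear_pair ℝ x y
  exact hS (hcol.subset hline)

variable [TopologicalSpace E] [IsTopologicalAddGroup E] [ContinuousSMul ℝ E]

theorem isPreconnected_sdiff_singleton_of_convex (hconv : Convex ℝ S) (hS : ¬ Collinear ℝ S)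
    (p : E) : IsPreconnected (S \ {p}) := by
  have segment_subset : ∀ {x y}, x ∈ S → y ∈ S → p ∉ segment ℝ x y → segment ℝ x y ⊆ S \ {p} :=
    fun hx hy hp => Set.subset_sdiff_singleton (hconv.segment_subset hx hy) hp
  refine isPreconnected_of_forall_pair fun x ⟨hx, hxp⟩ y ⟨hy, hyp⟩ => ?_
  by_cases hp : p ∈ segment ℝ x y
  · -- Make a detour through a point `q` off the line `xy`.
    obtain ⟨q, hq, hq_line⟩ := exists_notMem_line_of_not_collinear hS x y
    have hp_line : p ∈ line[ℝ, x, y] := (mem_segment_iff_wbtw.1 hp).mem_affineSpan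
    have notMem_segment : ∀ z ∈ line[ℝ, x, y], z ≠ p → p ∉ segment ℝ z q := fun z hz hzp hpz =>
      hq_line (affineSpan_pair_le_of_mem_of_mem hz hp_line
        ((mem_segment_iff_wbtw.1 hpz).right_mem_affineSpan_of_left_ne hzp))
    refine ⟨segment ℝ x q ∪ segment ℝ y q, Set.union_subset ?_ ?_, .inl (left_mem_segment ℝ x q),
      .inr (left_mem_segment ℝ y q), ?_⟩
    · exact segment_subset hx hq (notMem_segment x (left_mem_affineSpan_pair ℝ x y) hxp)
    · exact segment_subset hy hq (notMem_segment y (right_mem_affineSpan_pair ℝ x y) hyp)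
    · exact (convex_segment x q).isPreconnected.union q (right_mem_segment ℝ x q)
        (right_mem_segment ℝ y q) (convex_segment y q).isPreconnected
  · exact ⟨segment ℝ x y, segment_subset hx hy hp, left_mem_segment ℝ x y, right_mem_segment ℝ x y,
      (convex_segment x y).isPreconnected⟩

theorem collinear_of_collinear_inter_nhds (hconv : Convex ℝ S) {p : E} (hp : p ∈ S) {N : Set E}
    (hN : N ∈ 𝓝 p) (hcol : Collinear ℝ (S ∩ N)) : Collinear ℝ S := by
  have hpN : p ∈ S ∩ N := ⟨hp, mem_of_mem_nhds hN⟩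
  obtain ⟨u, hu⟩ := (collinear_iff_of_mem hpN).1 hcol
  refine (collinear_iff_of_mem hp).2 ⟨u, fun x hx => ?_⟩
  -- Shrink `x` towards `p` until it lies in `N`.
  have htendsto : Filter.Tendsto (AffineMap.lineMap p x : ℝ → E) (𝓝[>] 0) (𝓝 p) :=
    (AffineMap.lineMap_continuous.tendsto' 0 p (AffineMap.lineMap_apply_zero p x)).mono_left
      nhdsWithin_le_nhds
  obtain ⟨t, htN, ht0, ht1⟩ :=
    ((htendsto.eventually_mem hN).and (Ioo_mem_nhdsGT zero_lt_one)).exists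
  obtain ⟨r, hr⟩ := hu _ ⟨hconv.lineMap_mem hp hx ⟨ht0.le, ht1.le⟩, htN⟩
  have hsmul : t • (x - p) = r • u := by simpa [AffineMap.lineMap_apply] using hr
  refine ⟨t⁻¹ * r, ?_⟩
  rw [mul_smul, ← hsmul, inv_smul_smul₀ ht0.ne', vadd_eq_add, sub_add_cancel]

theorem hasPreconnectedBasis_nhdsWithin_sdiff_of_convex [LocallyConvexSpace ℝ E]
    (hconv : Convex ℝ S) (hS : ¬ Collinear ℝ S) {p : E} (hp : p ∈ S) :
    HasPreconnectedBasis (𝓝[S \ {p}] p) := by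
  intro N hN
  obtain ⟨O, hO, hON⟩ := mem_nhdsWithin_iff_exists_mem_nhds_inter.1 hN
  obtain ⟨B, ⟨hB, hBconv⟩, hBO⟩ := (LocallyConvexSpace.convex_basis (𝕜 := ℝ) p).mem_iff.1 hO
  refine ⟨(S ∩ B) \ {p}, ?_, ?_, ?_⟩
  · filter_upwards [self_mem_nhdsWithin, mem_nhdsWithin_of_mem_nhds hB] with x hx hxB
    exact ⟨⟨hx.1, hxB⟩, hx.2⟩
  · exact fun x hx => hON ⟨hBO hx.1.2, hx.1.1, hx.2⟩
  · exact isPreconnected_sdiff_singleton_of_convex (hconv.inter hBconv)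
      (fun hcol => hS (collinear_of_collinear_inter_nhds hconv hp hB hcol)) p

end Convex

section LocallyPlanar

open Topology

theorem convex_halfPlane : Convex ℝ HalfPlane :=
  convex_halfSpace_ge (LinearMap.snd ℝ ℝ ℝ).isLinear 0

theorem not_collinear_halfPlane : ¬ Collinear ℝ HalfPlane := by
  intro h
  obtain ⟨u, hu⟩ := (collinear_iff_of_mem (p₀ := (0 : ℝ × ℝ)) (by simp [HalfPlane])).1 h
  obtain ⟨r, hr⟩ := hu (1, 0) (by simp [HalfPlane])
  obtain ⟨s, hs⟩ := hu (0, 1) (by simp [HalfPlane])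
  simp only [vadd_eq_add, add_zero, Prod.ext_iff, Prod.smul_fst, Prod.smul_snd, smul_eq_mul]
    at hr hs
  have hdet : (r * u.1) * (s * u.2) = (r * u.2) * (s * u.1) := by ring
  simp [← hr.1, ← hr.2, ← hs.1, ← hs.2] at hdet

theorem hasPreconnectedBasis_nhdsNE_plane (p : ℝ × ℝ) : HasPreconnectedBasis (𝓝[≠] p) := by
  have hplane : ¬ Collinear ℝ (Set.univ : Set (ℝ × ℝ)) :=
    fun h => not_collinear_halfPlane (h.subset (Set.subset_univ _))
  rw [Set.compl_eq_univ_sdiff]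
  exact hasPreconnectedBasis_nhdsWithin_sdiff_of_convex convex_univ hplane (Set.mem_univ p)

theorem hasPreconnectedBasis_nhdsNE_halfPlane (p : HalfPlane) :
    HasPreconnectedBasis (𝓝[≠] p) := by
  rw [hasPreconnectedBasis_nhdsNE_iff IsEmbedding.subtypeVal, Subtype.range_val]
  exact hasPreconnectedBasis_nhdsWithin_sdiff_of_convex convex_halfPlane not_collinear_halfPlane p.2

theorem hasPreconnectedBasis_of_homeomorph {X Y : Type*} [TopologicalSpace X] [TopologicalSpace Y]
    {S U : Set X} {x : X} (hUS : U ⊆ S) (hU : U ∈ 𝓝[S] x) (hx : x ∈ S) {V : Set Y}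
    (hV : IsOpen V) (e : U ≃ₜ V) (hY : ∀ y : Y, HasPreconnectedBasis (𝓝[≠] y)) :
    HasPreconnectedBasis (𝓝[S \ {x}] x) := by
  have hbasis : HasPreconnectedBasis (𝓝[≠] (⟨x, mem_of_mem_nhdsWithin hx hU⟩ : U)) :=
    (hasPreconnectedBasis_nhdsNE_iff_of_isOpenEmbedding
      (hV.isOpenEmbedding_subtypeVal.comp e.isOpenEmbedding)).2 (hY _)
  rw [hasPreconnectedBasis_nhdsNE_iff IsEmbedding.subtypeVal, Subtype.range_val] at hbasis
  have hnhds : 𝓝[U] x = 𝓝[S] x :=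
    (nhdsWithin_mono x hUS).antisymm (nhdsWithin_le_of_mem hU)
  rwa [Set.sdiff_eq, nhdsWithin_inter, hnhds, ← nhdsWithin_inter, ← Set.sdiff_eq] at hbasis

theorem IsLocallyPlanarPt.hasPreconnectedBasis {K : SimplicialComplex ℝ (Pt n)} {x : Pt n}
    (h : IsLocallyPlanarPt K x) : HasPreconnectedBasis (𝓝[K.space \ {x}] x) := by
  obtain ⟨hx, ⟨U, hUK, hU, V, hV, ⟨e⟩⟩ | ⟨U, hUK, hU, V, hV, ⟨e⟩⟩⟩ := h
  · exact hasPreconnectedBasis_of_homeomorph hUK hU hx hV e hasPreconnectedBasis_nhdsNE_plane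
  · exact hasPreconnectedBasis_of_homeomorph hUK hU hx hV e hasPreconnectedBasis_nhdsNE_halfPlane

end LocallyPlanar

section Star

open Topology

variable {E : Type*} [AddCommGroup E] [Module ℝ E] {K : SimplicialComplex ℝ E}
  {F G : Set (Finset E)} {v : E}

theorem biUnion_convexHull_inter_subset (hF : F ⊆ K.faces) (hG : G ⊆ K.faces)
    (hFG : ∀ s ∈ F, ∀ t ∈ G, (s ∩ t : Set E) ⊆ {v}) :
    (⋃ s ∈ F, convexHull ℝ (s : Set E)) ∩ (⋃ t ∈ G, convexHull ℝ (t : Set E)) ⊆ {v} := by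
  rintro x ⟨hxF, hxG⟩
  obtain ⟨s, hs, hxs⟩ := Set.mem_iUnion₂.1 hxF
  obtain ⟨t, ht, hxt⟩ := Set.mem_iUnion₂.1 hxG
  have hx := convexHull_mono (𝕜 := ℝ) (hFG s hs t ht)
    (K.inter_subset_convexHull (hF hs) (hG ht) ⟨hxs, hxt⟩)
  rwa [convexHull_singleton] at hx

variable [TopologicalSpace E] [IsTopologicalAddGroup E] [ContinuousSMul ℝ E] [T2Space E]

theorem isClosed_biUnion_convexHull
    (hK : LocallyFinite fun s : K.faces => convexHull ℝ (s : Set E)) (hF : F ⊆ K.faces) :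
    IsClosed (⋃ s ∈ F, convexHull ℝ (s : Set E)) := by
  rw [Set.biUnion_eq_iUnion]
  exact (hK.comp_injective (Set.inclusion_injective hF)).isClosed_iUnion
    fun s => (s : Finset E).finite_toSet.isClosed_convexHull ℝ

theorem star_mem_nhdsWithin
    (hK : LocallyFinite fun s : K.faces => convexHull ℝ (s : Set E)) (hv : v ∈ K.vertices) :
    ⋃ s ∈ {s ∈ K.faces | v ∈ s}, convexHull ℝ (s : Set E) ∈ 𝓝[K.space] v := by
  have hclosed := isClosed_biUnion_convexHull hK (Set.sep_subset K.faces (v ∉ ·))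
  have hv_notMem : v ∉ ⋃ s ∈ {s ∈ K.faces | v ∉ s}, convexHull ℝ (s : Set E) := by
    intro h
    obtain ⟨s, ⟨hs, hvs⟩, hvs'⟩ := Set.mem_iUnion₂.1 h
    exact hvs ((SimplicialComplex.vertex_mem_convexHull_iff hv hs).1 hvs')
  filter_upwards [self_mem_nhdsWithin,
    mem_nhdsWithin_of_mem_nhds (hclosed.isOpen_compl.mem_nhds hv_notMem)] with x hxK hx
  obtain ⟨s, hs, hxs⟩ := SimplicialComplex.mem_space_iff.1 hxK
  have hvs : v ∈ s := by_contra fun hvs => hx (Set.mem_biUnion ⟨hs, hvs⟩ hxs)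
  exact Set.mem_biUnion ⟨hs, hvs⟩ hxs

theorem inter_biUnion_convexHull_nonempty (hF : F ⊆ {s ∈ K.faces | v ∈ s})
    (hF_nontrivial : ∃ s ∈ F, s.Nontrivial) {W : Set E} (hW : W ∈ 𝓝[K.space \ {v}] v) :
    (W ∩ ⋃ s ∈ F, convexHull ℝ (s : Set E)).Nonempty := by
  obtain ⟨s, hs, hs_nontrivial⟩ := hF_nontrivial
  have hsub : (s : Set E) ⊆ convexHull ℝ (s : Set E) := subset_convexHull ℝ _
  have hacc : AccPt v (Filter.principal (convexHull ℝ (s : Set E))) :=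
    (convex_convexHull ℝ _).isPreconnected.preperfect_of_nontrivial
      (Set.Nontrivial.mono hs_nontrivial hsub) v (hsub (hF hs).2)
  have : (𝓝[convexHull ℝ (s : Set E) \ {v}] v).NeBot := accPt_principal_iff_nhdsWithin.1 hacc
  have hW' : W ∈ 𝓝[convexHull ℝ (s : Set E) \ {v}] v :=
    nhdsWithin_mono v (Set.sdiff_subset_sdiff_left (K.convexHull_subset_space (hF hs).1)) hW
  obtain ⟨x, hxW, hxs, -⟩ := Filter.nonempty_of_mem (Filter.inter_mem hW' self_mem_nhdsWithin)
  exact ⟨x, hxW, Set.mem_biUnion hs hxs⟩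

theorem not_hasPreconnectedBasis_of_star_eq_union
    (hK : LocallyFinite fun s : K.faces => convexHull ℝ (s : Set E))
    (hstar : {s ∈ K.faces | v ∈ s} = F ∪ G)
    (hFG : ∀ s ∈ F, ∀ t ∈ G, (s ∩ t : Set E) ⊆ {v})
    (hF : ∃ s ∈ F, s.Nontrivial) (hG : ∃ t ∈ G, t.Nontrivial) :
    ¬ HasPreconnectedBasis (𝓝[K.space \ {v}] v) := by
  intro hbasis
  have hF_star : F ⊆ {s ∈ K.faces | v ∈ s} := hstar ▸ Set.subset_union_left
  have hG_star : G ⊆ {s ∈ K.faces | v ∈ s} := hstar ▸ Set.subset_union_right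
  have hFK : F ⊆ K.faces := hF_star.trans (Set.sep_subset _ _)
  have hGK : G ⊆ K.faces := hG_star.trans (Set.sep_subset _ _)
  have hv : v ∈ K.vertices := by
    obtain ⟨s, hs, -⟩ := hF
    exact K.down_closed (hFK hs) (Finset.singleton_subset_iff.2 (hF_star hs).2)
      (Finset.singleton_nonempty v)
  have hstar_mem : (⋃ s ∈ F ∪ G, convexHull ℝ (s : Set E)) \ {v} ∈ 𝓝[K.space \ {v}] v := by
    rw [← hstar]
    filter_upwards [self_mem_nhdsWithin,
      nhdsWithin_mono v Set.sdiff_subset (star_mem_nhdsWithin hK hv)] with x hx hx_star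
    exact ⟨hx_star, hx.2⟩
  obtain ⟨W, hW, hW_sub, hW_conn⟩ := hbasis _ hstar_mem
  rw [Set.biUnion_union] at hW_sub
  obtain ⟨x, hxW, hx⟩ := isPreconnected_closed_iff.1 hW_conn _ _
    (isClosed_biUnion_convexHull hK hFK) (isClosed_biUnion_convexHull hK hGK)
    (hW_sub.trans Set.sdiff_subset) (inter_biUnion_convexHull_nonempty hF_star hF hW)
    (inter_biUnion_convexHull_nonempty hG_star hG hW)
  exact (hW_sub hxW).2 (biUnion_convexHull_inter_subset hFK hGK hFG hx)

end Star

section Link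

variable {K : SimplicialComplex ℝ (Pt n)} {v : Pt n} {s t : Finset (Pt n)}

theorem mem_linkVertices_of_mem_face (hs : s ∈ K.faces) (hvs : v ∈ s) {d : Pt n} (hds : d ∈ s)
    (hdv : d ≠ v) : d ∈ linkVertices K v := by
  classical
  refine ⟨hdv, {v, d}, K.down_closed hs ?_ (Finset.insert_nonempty _ _), Finset.coe_pair⟩
  simp [Finset.insert_subset_iff, hvs, hds]

theorem linkGraph_reachable_of_mem_face (hs : s ∈ K.faces) (hvs : v ∈ s) {c d : linkVertices K v}
    (hcs : (c : Pt n) ∈ s) (hds : (d : Pt n) ∈ s) : (linkGraph K v).Reachable c d := by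
  classical
  obtain rfl | hcd := eq_or_ne c d
  · rfl
  have hcd' : (c : Pt n) ≠ d := Subtype.coe_injective.ne hcd
  refine SimpleGraph.Adj.reachable ⟨hcd', {v, (c : Pt n), (d : Pt n)},
    K.down_closed hs ?_ (Finset.insert_nonempty _ _), ?_, by simp⟩
  · simp [Finset.insert_subset_iff, hvs, hcs, hds]
  · exact Finset.card_eq_three.2 ⟨_, _, _, c.2.1.symm, d.2.1.symm, hcd', rfl⟩

/-- The faces through `v` with a vertex in the connected component of `a` in the link graph of `v`;
their hulls form the sector of the star of `v` that belongs to this component. -/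
def componentStar (K : SimplicialComplex ℝ (Pt n)) {v : Pt n} (a : linkVertices K v) :
    Set (Finset (Pt n)) :=
  {s ∈ K.faces | v ∈ s ∧ ∃ c : linkVertices K v, (c : Pt n) ∈ s ∧ (linkGraph K v).Reachable a c}

theorem componentStar_subset_star (a : linkVertices K v) :
    componentStar K a ⊆ {s ∈ K.faces | v ∈ s} :=
  fun _ hs => ⟨hs.1, hs.2.1⟩

theorem mem_componentStar_iff_reachable {a d : linkVertices K v} (hs : s ∈ K.faces) (hvs : v ∈ s)
    (hds : (d : Pt n) ∈ s) : s ∈ componentStar K a ↔ (linkGraph K v).Reachable a d :=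
  ⟨fun ⟨_, _, _, hcs, hac⟩ => hac.trans (linkGraph_reachable_of_mem_face hs hvs hcs hds),
    fun had => ⟨hs, hvs, d, hds, had⟩⟩

theorem inter_subset_singleton_of_mem_componentStar {a : linkVertices K v}
    (hs : s ∈ componentStar K a) (ht : t ∈ {t ∈ K.faces | v ∈ t} \ componentStar K a) :
    (s ∩ t : Set (Pt n)) ⊆ {v} := by
  rintro d ⟨hds, hdt⟩
  by_contra hdv
  have hd : d ∈ linkVertices K v := mem_linkVertices_of_mem_face hs.1 hs.2.1 hds hdv
  have had : (linkGraph K v).Reachable a ⟨d, hd⟩ :=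
    (mem_componentStar_iff_reachable hs.1 hs.2.1 hds).1 hs
  exact ht.2 ((mem_componentStar_iff_reachable ht.1.1 ht.1.2 hdt).2 had)

theorem exists_face_nontrivial_of_mem_linkVertices {a : Pt n} (ha : a ∈ linkVertices K v) :
    ∃ s ∈ K.faces, v ∈ s ∧ a ∈ s ∧ s.Nontrivial := by
  obtain ⟨hav, s, hs, hsva⟩ := ha
  have hvs : v ∈ s := Finset.mem_coe.1 (hsva ▸ Set.mem_insert v {a})
  have has : a ∈ s := Finset.mem_coe.1 (hsva ▸ Set.mem_insert_of_mem v rfl)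
  exact ⟨s, hs, hvs, has, v, hvs, a, has, hav.symm⟩

end Link

theorem not_locallyPlanar_of_disconnected_link_general (K : SimplicialComplex ℝ (Pt n))
    (hK : LocallyFinite fun s : K.faces => convexHull ℝ (s : Set (Pt n))) (v : Pt n)
    (hdisc : ∃ a b : linkVertices K v, ¬ (linkGraph K v).Reachable a b) :
    ¬ IsLocallyPlanarPt K v := by
  intro hplanar
  obtain ⟨a, b, hab⟩ := hdisc
  obtain ⟨s, hs, hvs, has, hs_nontrivial⟩ := exists_face_nontrivial_of_mem_linkVertices a.2
  obtain ⟨t, ht, hvt, hbt, ht_nontrivial⟩ := exists_face_nontrivial_of_mem_linkVertices b.2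
  have hs_mem : s ∈ componentStar K a := (mem_componentStar_iff_reachable hs hvs has).2 .rfl
  have ht_notMem : t ∉ componentStar K a :=
    fun h => hab ((mem_componentStar_iff_reachable ht hvt hbt).1 h)
  exact not_hasPreconnectedBasis_of_star_eq_union hK
    (Set.union_sdiff_cancel (componentStar_subset_star a)).symm
    (fun _ hs _ ht => inter_subset_singleton_of_mem_componentStar hs ht)
    ⟨s, hs_mem, hs_nontrivial⟩ ⟨t, ⟨⟨ht, hvt⟩, ht_notMem⟩, ht_nontrivial⟩
    hplanar.hasPreconnectedBasis

/-- if every edge through `v` lies in at most two triangles and the link graph of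
`v` is disconnected, then `v` is not a locally planar point of `|K|`. -/
theorem not_locallyPlanar_of_disconnected_link (K : SimplicialComplex ℝ (Pt n))
    (hfin : K.faces.Finite) (hdim : TwoDimensional K)
    (v : Pt n) (hv : v ∈ K.vertices)
    (hle : ∀ e ∈ K.faces, e.card = 2 → v ∈ e → (trianglesContaining K e).ncard ≤ 2)
    (hdisc : ∃ a b : linkVertices K v, ¬ (linkGraph K v).Reachable a b) :
    ¬ IsLocallyPlanarPt K v := by
  have := hfin.to_subtype
  exact not_locallyPlanar_of_disconnected_link_general K (locallyFinite_of_finite _) v hdisc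

end PaperAlg
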